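/- arXiv:2101.09830 — 3 statements merged into one kernel-verified Lean document; each statement's English description precedes it below -/
import Mathlib

section
/- Let ‖·‖ be a norm on ℝ^m, let Q_1, …, Q_m be a generalized QR system for ‖·‖, let x ∈ ℝ^m be nonzero, and let k be the largest index in {1, …, m} with |x_k| ≥ 2^{−k}‖x‖_∞. Then ‖Σ_{j=k+1}^m x_j Q_j‖ ≤ |x_k| ≤ ‖Σ_{j=1}^k x_j Q_j‖. -/
/-!
The upper bound is the triangle inequality: `N (∑_{j>k} x_j Q_j) ≤ ∑_{j>k} |x_j|`, and maximality
of `k` gives `|x_j| < 2^{-(j+1)} ‖x‖` for `j > k`, so the geometric series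
(`sum_Ioi_half_pow_le`) bounds this by `2^{-(k+1)} ‖x‖ ≤ |x_k|`.

The lower bound is homogeneity: if `x_k ≠ 0`, then `∑_{j≤k} x_j Q_j = x_k (Q_k - w)` with `w` in the
span of the earlier `Q_j`, and `N (Q_k - w) ≥ 1`. The case `x_k = 0` is nonnegativity of `N`.
-/

/-- `N` is a norm on `ℝ^m`. -/
def IsNorm {m : ℕ} (N : (Fin m → ℝ) → ℝ) : Prop :=
  (∀ x, N x = 0 ↔ x = 0) ∧
  (∀ (a : ℝ) (x : Fin m → ℝ), N (a • x) = |a| * N x) ∧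
  (∀ x y : Fin m → ℝ, N (x + y) ≤ N x + N y)

/-- `Q 0, …, Q (n-1)` is a generalized QR system for the norm `N` on `ℝ^m`:
every `Q j` has `N`-norm one, and for every `k` and every `w` in the linear span of
the previous vectors `Q j`, `j < k`, we have `N (Q k - w) ≥ 1`. -/
def GenQRSystem {m n : ℕ} (N : (Fin m → ℝ) → ℝ) (Q : Fin n → Fin m → ℝ) : Prop :=
  (∀ j, N (Q j) = 1) ∧
  ∀ k : Fin n, ∀ w ∈ Submodule.span ℝ (Q '' {j | j < k}), 1 ≤ N (Q k - w)

theorem IsNorm.nonneg {m : ℕ} {N : (Fin m → ℝ) → ℝ} (hN : IsNorm N) (v : Fin m → ℝ) :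
    0 ≤ N v := by
  obtain ⟨h0, hs, ht⟩ := hN
  have h1 := ht v ((-1 : ℝ) • v)
  have h2 : v + (-1 : ℝ) • v = 0 := by simp
  rw [h2, (h0 0).2 rfl, hs] at h1
  norm_num at h1
  exact h1

theorem IsNorm.sum_le {m : ℕ} {N : (Fin m → ℝ) → ℝ} (hN : IsNorm N) {ι : Type*}
    (s : Finset ι) (f : ι → Fin m → ℝ) : N (∑ j ∈ s, f j) ≤ ∑ j ∈ s, N (f j) :=
  Finset.le_sum_of_subadditive N ((hN.1 0).2 rfl).le hN.2.2 s f

theorem sum_Ioi_half_pow_le {m : ℕ} (k : Fin m) :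
    ∑ j ∈ Finset.Ioi k, (2 : ℝ)⁻¹ ^ (j.val + 1) ≤ (2 : ℝ)⁻¹ ^ (k.val + 1) := by
  have h1 : ∑ j ∈ Finset.Ioi k, (2 : ℝ)⁻¹ ^ (j.val + 1)
      = ∑ i ∈ Finset.Ico (k.val + 1) m, (2 : ℝ)⁻¹ ^ (i + 1) := by
    refine Finset.sum_bij (fun j _ => j.val) ?_ ?_ ?_ ?_
    · intro j hj
      have h : k < j := Finset.mem_Ioi.1 hj
      exact Finset.mem_Ico.2 ⟨h, j.isLt⟩
    · intro a _ b _ h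
      exact Fin.ext h
    · intro i hi
      obtain ⟨h, h'⟩ := Finset.mem_Ico.1 hi
      exact ⟨⟨i, h'⟩, Finset.mem_Ioi.2 h, rfl⟩
    · intro j _
      rfl
  have h2 := geom_sum_Ico_le_of_lt_one (x := (2 : ℝ)⁻¹) (m := k.val + 1) (n := m)
    (by norm_num) (by norm_num)
  calc ∑ j ∈ Finset.Ioi k, (2 : ℝ)⁻¹ ^ (j.val + 1)
      = (∑ i ∈ Finset.Ico (k.val + 1) m, (2 : ℝ)⁻¹ ^ i) * 2⁻¹ := by
        rw [h1, Finset.sum_mul]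
        rfl
    _ ≤ (2 : ℝ)⁻¹ ^ (k.val + 1) / (1 - 2⁻¹) * 2⁻¹ := by gcongr
    _ = (2 : ℝ)⁻¹ ^ (k.val + 1) := by ring

/-- If `k` is the largest (0-based) index with `|x k| ≥ 2^{-(k+1)} ‖x‖_∞`, then
`N (Σ_{j > k} x_j Q_j) ≤ |x k| ≤ N (Σ_{j ≤ k} x_j Q_j)` for a generalized QR system `Q`.
Here `‖x‖` is the sup norm on `Fin m → ℝ`. -/
theorem tail_head_inequality {m : ℕ}
    (N : (Fin m → ℝ) → ℝ) (hN : IsNorm N)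
    (Q : Fin m → Fin m → ℝ) (hQ : GenQRSystem N Q)
    (x : Fin m → ℝ) (hx : x ≠ 0) (k : Fin m)
    (hk : (2 : ℝ)⁻¹ ^ (k.val + 1) * ‖x‖ ≤ |x k|)
    (hk_largest : ∀ j : Fin m, (2 : ℝ)⁻¹ ^ (j.val + 1) * ‖x‖ ≤ |x j| → j ≤ k) :
    N (∑ j ∈ Finset.Ioi k, x j • Q j) ≤ |x k| ∧
    |x k| ≤ N (∑ j ∈ Finset.Iic k, x j • Q j) := by
  constructor
  · calc N (∑ j ∈ Finset.Ioi k, x j • Q j)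
        ≤ ∑ j ∈ Finset.Ioi k, N (x j • Q j) := hN.sum_le _ _
      _ ≤ ∑ j ∈ Finset.Ioi k, (2 : ℝ)⁻¹ ^ (j.val + 1) * ‖x‖ := by
          refine Finset.sum_le_sum fun j hj => ?_
          rw [hN.2.1, hQ.1, mul_one]
          by_contra! h
          exact absurd (hk_largest j h.le) (not_le.2 (Finset.mem_Ioi.1 hj))
      _ = (∑ j ∈ Finset.Ioi k, (2 : ℝ)⁻¹ ^ (j.val + 1)) * ‖x‖ := (Finset.sum_mul ..).symm
      _ ≤ (2 : ℝ)⁻¹ ^ (k.val + 1) * ‖x‖ :=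
          mul_le_mul_of_nonneg_right (sum_Ioi_half_pow_le k) (norm_nonneg x)
      _ ≤ |x k| := hk
  · by_cases h0 : x k = 0
    · rw [h0, abs_zero]
      exact hN.nonneg _
    -- Factor out `x k`: the head is `x k • (Q k - w)` for this `w` in the span of earlier vectors.
    set w : Fin m → ℝ := -(x k)⁻¹ • ∑ j ∈ Finset.Iio k, x j • Q j with hw
    have hmem : w ∈ Submodule.span ℝ (Q '' {j | j < k}) :=
      Submodule.smul_mem _ _ <| Submodule.sum_mem _ fun j hj =>
        Submodule.smul_mem _ _ <| Submodule.subset_span ⟨j, Finset.mem_Iio.1 hj, rfl⟩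
    have hsum : ∑ j ∈ Finset.Iic k, x j • Q j = x k • (Q k - w) := by
      rw [← Finset.Iio_insert, Finset.sum_insert (by simp), hw, neg_smul, sub_neg_eq_add,
        smul_add, smul_inv_smul₀ h0]
    rw [hsum, hN.2.1]
    exact le_mul_of_one_le_right (abs_nonneg _) (hQ.2 k w hmem)
end

section
/- Let m be a positive integer and ‖·‖ a norm on ℝ^m. Then there exists a constant C > 0, depending only on m and ‖·‖, such that for every matrix Q ∈ ℝ^{m×m} whose columns form a generalized QR system for ‖·‖, the condition number of Q satisfies κ(Q) = ‖Q⁻¹‖_{op} · ‖Q‖_{op} ≤ C, where ‖·‖_{op} denotes the operator norm on linear maps of ℝ^m induced by the vector norm ‖·‖. In particular, this bound is independent of any full-rank matrix A that was factorized to produce Q. -/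
/-- The operator norm of a matrix `M` acting on `ℝ^m`, induced by the vector norm `N`:
`‖M‖_op = sup_{x ≠ 0} N (M x) / N x`. -/
noncomputable def opNormWrt {m : ℕ} (N : (Fin m → ℝ) → ℝ)
    (M : Matrix (Fin m) (Fin m) ℝ) : ℝ :=
  sSup {c : ℝ | ∃ x : Fin m → ℝ, x ≠ 0 ∧ c = N (M.mulVec x) / N x}

namespace IsNorm

variable {m : ℕ} {N : (Fin m → ℝ) → ℝ}

/-- The norm `N` as a Mathlib seminorm. -/
def toSeminorm (hN : IsNorm N) : Seminorm ℝ (Fin m → ℝ) :=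
  Seminorm.of N hN.2.2 (fun a x => by rw [hN.2.1, Real.norm_eq_abs])

lemma nonneg_s12 (hN : IsNorm N) (x : Fin m → ℝ) : 0 ≤ N x :=
  apply_nonneg hN.toSeminorm x

lemma pos (hN : IsNorm N) {x : Fin m → ℝ} (hx : x ≠ 0) : 0 < N x :=
  lt_of_le_of_ne (hN.nonneg_s12 x) (fun h => hx ((hN.1 x).1 h.symm))

lemma sum_smul_le (hN : IsNorm N) (q : Fin m → Fin m → ℝ) (x : Fin m → ℝ) :
    N (∑ j, x j • q j) ≤ ∑ j, |x j| * N (q j) := by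
  have h := Finset.le_sum_of_subadditive N ((hN.1 0).2 rfl).le hN.2.2 Finset.univ
    (fun j => x j • q j)
  simpa only [hN.2.1] using h

lemma exists_le_mul_norm (hN : IsNorm N) : ∃ b > 0, ∀ x, N x ≤ b * ‖x‖ := by
  refine ⟨∑ j, N (Pi.single j 1) + 1, ?_, fun x => ?_⟩
  · have : 0 ≤ ∑ j, N (Pi.single j 1) := Finset.sum_nonneg fun j _ => hN.nonneg_s12 _
    linarith
  · have hx : x = ∑ j, x j • (Pi.single j 1 : Fin m → ℝ) := pi_eq_sum_univ' x
    calc N x = N (∑ j, x j • (Pi.single j 1 : Fin m → ℝ)) := by rw [← hx]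
      _ ≤ ∑ j, |x j| * N (Pi.single j 1) := hN.sum_smul_le _ _
      _ ≤ ∑ j, ‖x‖ * N (Pi.single j 1) := Finset.sum_le_sum fun j _ =>
          mul_le_mul_of_nonneg_right (norm_le_pi_norm x j) (hN.nonneg_s12 _)
      _ ≤ (∑ j, N (Pi.single j 1) + 1) * ‖x‖ := by
          rw [← Finset.mul_sum]
          nlinarith [norm_nonneg x]

/-- A norm is bounded below by a multiple of the sup norm: it is continuous, so it attains a
positive minimum on the compact unit sphere. -/
lemma exists_mul_norm_le (hm : 0 < m) (hN : IsNorm N) : ∃ a > 0, ∀ x, a * ‖x‖ ≤ N x := by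
  have : Nonempty (Fin m) := ⟨⟨0, hm⟩⟩
  have hc : Continuous N := by
    have h : ConvexOn ℝ Set.univ N := hN.toSeminorm.convexOn
    exact continuousOn_univ.1 (h.continuousOn isOpen_univ)
  obtain ⟨u, hu, hmin⟩ := (isCompact_sphere (0 : Fin m → ℝ) 1).exists_isMinOn
    (NormedSpace.sphere_nonempty.2 zero_le_one) hc.continuousOn
  have hu0 : u ≠ 0 := ne_zero_of_mem_unit_sphere (⟨u, hu⟩ : Metric.sphere (0 : Fin m → ℝ) 1)
  refine ⟨N u, hN.pos hu0, fun x => ?_⟩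
  rcases eq_or_ne x 0 with rfl | hx
  · simpa using hN.nonneg_s12 0
  have hx' : 0 < ‖x‖ := norm_pos_iff.2 hx
  have hmem : ‖x‖⁻¹ • x ∈ Metric.sphere (0 : Fin m → ℝ) 1 := by
    simp [norm_smul, hx'.ne']
  have h : N u ≤ N (‖x‖⁻¹ • x) := hmin hmem
  rw [hN.2.1, abs_of_pos (inv_pos.2 hx'), inv_mul_eq_div, le_div_iff₀ hx'] at h
  exact h

end IsNorm

namespace GenQRSystem

variable {m : ℕ} {N : (Fin m → ℝ) → ℝ} {q : Fin m → Fin m → ℝ}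

lemma abs_le_of_mem_span (hN : IsNorm N) (hq : GenQRSystem N q) (k : Fin m) (t : ℝ)
    {s : Fin m → ℝ} (hs : s ∈ Submodule.span ℝ (q '' {j | j < k})) :
    |t| ≤ N (s + t • q k) := by
  rcases eq_or_ne t 0 with rfl | ht
  · simpa using hN.nonneg_s12 s
  have h := hq.2 k (-(t⁻¹ • s)) (Submodule.neg_mem _ (Submodule.smul_mem _ _ hs))
  have e : s + t • q k = t • (q k - -(t⁻¹ • s)) := by
    rw [sub_neg_eq_add, smul_add, smul_inv_smul₀ ht, add_comm]
  rw [e, hN.2.1]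
  exact le_mul_of_one_le_right (abs_nonneg t) h

/-- Dropping the last term of a partial sum at most doubles its norm, and the coefficient of that
term is bounded by the norm of the sum. -/
lemma partial_sum_step (hN : IsNorm N) (hq : GenQRSystem N q) (x : Fin m → ℝ) (k : Fin m) :
    |x k| ≤ N (∑ j with j.val < k.val + 1, x j • q j) ∧
      N (∑ j with j.val < k.val, x j • q j) ≤
        2 * N (∑ j with j.val < k.val + 1, x j • q j) := by
  set s := ∑ j with j.val < k.val, x j • q j
  have hsplit : ∑ j with j.val < k.val + 1, x j • q j = s + x k • q k := by
    have hset : (Finset.univ.filter fun j : Fin m => j.val < k.val + 1) =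
        insert k (Finset.univ.filter fun j : Fin m => j.val < k.val) := by
      ext j
      simp only [Finset.mem_filter, Finset.mem_univ, true_and, Finset.mem_insert, Fin.ext_iff]
      omega
    rw [hset, Finset.sum_insert (by simp), add_comm]
  have hmem : s ∈ Submodule.span ℝ (q '' {j | j < k}) :=
    Submodule.sum_mem _ fun j hj => Submodule.smul_mem _ _
      (Submodule.subset_span ⟨j, by simpa using hj, rfl⟩)
  rw [hsplit]
  have h1 := abs_le_of_mem_span hN hq k (x k) hmem
  refine ⟨h1, ?_⟩
  have h2 := hN.2.2 (s + x k • q k) ((-x k) • q k)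
  rw [hN.2.1, abs_neg, hq.1 k, mul_one, neg_smul, add_neg_cancel_right] at h2
  linarith

lemma partial_sum_le (hN : IsNorm N) (hq : GenQRSystem N q) (x : Fin m → ℝ) (d : ℕ) (hd : d ≤ m) :
    N (∑ j with j.val < m - d, x j • q j) ≤ 2 ^ d * N (∑ j, x j • q j) := by
  induction d with
  | zero => simp
  | succ d ih =>
    have h := (partial_sum_step hN hq x ⟨m - (d + 1), by omega⟩).2
    have e : m - (d + 1) + 1 = m - d := by omega
    simp only [e] at h
    have := ih (by omega)
    rw [pow_succ]
    linarith

lemma norm_le (hN : IsNorm N) (hq : GenQRSystem N q) (x : Fin m → ℝ) :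
    ‖x‖ ≤ 2 ^ m * N (∑ j, x j • q j) := by
  have h0 := hN.nonneg_s12 (∑ j, x j • q j)
  refine (pi_norm_le_iff_of_nonneg (by positivity)).2 fun k => ?_
  have h1 := (partial_sum_step hN hq x k).1
  have h2 := partial_sum_le hN hq x (m - (k.val + 1)) (by omega)
  have e : m - (m - (k.val + 1)) = k.val + 1 := by omega
  rw [e] at h2
  have h3 : (2 : ℝ) ^ (m - (k.val + 1)) ≤ 2 ^ m :=
    pow_le_pow_right₀ one_le_two (by omega)
  exact h1.trans (h2.trans (mul_le_mul_of_nonneg_right h3 h0))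

end GenQRSystem

lemma opNormWrt_nonneg {m : ℕ} {N : (Fin m → ℝ) → ℝ} (hN : IsNorm N)
    (M : Matrix (Fin m) (Fin m) ℝ) : 0 ≤ opNormWrt N M := by
  refine Real.sSup_nonneg ?_
  rintro c ⟨x, -, rfl⟩
  exact div_nonneg (hN.nonneg_s12 _) (hN.nonneg_s12 _)

lemma opNormWrt_le {m : ℕ} {N : (Fin m → ℝ) → ℝ} (hN : IsNorm N)
    {M : Matrix (Fin m) (Fin m) ℝ} {K : ℝ} (hK : 0 ≤ K)
    (h : ∀ x, N (M.mulVec x) ≤ K * N x) : opNormWrt N M ≤ K := by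
  refine Real.sSup_le ?_ hK
  rintro c ⟨x, hx, rfl⟩
  exact (div_le_iff₀ (hN.pos hx)).2 (h x)

/-- Condition number bound: there is a constant `C > 0` depending only on `m` and the
norm `N` such that every matrix `Q` whose columns form a generalized QR system for `N`
satisfies `κ(Q) = ‖Q⁻¹‖_op * ‖Q‖_op ≤ C`, where `‖·‖_op` is the operator norm induced
by `N`. In particular the bound is independent of any matrix `A` factorized to produce `Q`. -/
theorem condition_number_bound {m : ℕ} (hm : 0 < m)
    (N : (Fin m → ℝ) → ℝ) (hN : IsNorm N) :
    ∃ C > (0 : ℝ), ∀ Q : Matrix (Fin m) (Fin m) ℝ,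
      GenQRSystem N (fun j i => Q i j) →
      opNormWrt N Q⁻¹ * opNormWrt N Q ≤ C := by
  obtain ⟨a, ha, hlow⟩ := hN.exists_mul_norm_le hm
  obtain ⟨b, hb, hupp⟩ := hN.exists_le_mul_norm
  have hm' : (0 : ℝ) < m := Nat.cast_pos.2 hm
  refine ⟨b * 2 ^ m * (m / a), by positivity, fun Q hQ => ?_⟩
  have hmul : ∀ x : Fin m → ℝ, Q.mulVec x = ∑ j, x j • (fun j i => Q i j) j := by
    intro x
    ext i
    simp [Matrix.mulVec, dotProduct, Finset.sum_apply, mul_comm]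
  have hQlow : ∀ x, ‖x‖ ≤ 2 ^ m * N (Q.mulVec x) := by
    intro x
    rw [hmul]
    exact hQ.norm_le hN x
  have hQupp : ∀ x, N (Q.mulVec x) ≤ m / a * N x := by
    intro x
    have h1 : N (Q.mulVec x) ≤ m * ‖x‖ := by
      rw [hmul]
      refine (hN.sum_smul_le _ x).trans ?_
      calc ∑ j, |x j| * N ((fun j i => Q i j) j) ≤ ∑ _j : Fin m, ‖x‖ :=
            Finset.sum_le_sum fun j _ => by
              rw [hQ.1 j, mul_one]
              exact norm_le_pi_norm x j
        _ = m * ‖x‖ := by simp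
    have h2 : ‖x‖ ≤ N x / a := (le_div_iff₀' ha).2 (hlow x)
    calc N (Q.mulVec x) ≤ m * ‖x‖ := h1
      _ ≤ m * (N x / a) := mul_le_mul_of_nonneg_left h2 hm'.le
      _ = m / a * N x := by ring
  have hunit : IsUnit Q := by
    rw [← Matrix.mulVec_injective_iff_isUnit]
    intro x y hxy
    have h := hQlow (x - y)
    have h0 : Q.mulVec (x - y) = 0 := by
      rw [Matrix.mulVec_sub]
      exact sub_eq_zero.2 hxy
    rw [h0, (hN.1 0).2 rfl, mul_zero] at h
    exact sub_eq_zero.1 (norm_le_zero_iff.1 h)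
  have hinv : ∀ y, N (Q⁻¹.mulVec y) ≤ b * 2 ^ m * N y := by
    intro y
    have h := hQlow (Q⁻¹.mulVec y)
    rw [Matrix.mulVec_mulVec, Matrix.mul_nonsing_inv _ ((Matrix.isUnit_iff_isUnit_det Q).1 hunit),
      Matrix.one_mulVec] at h
    rw [mul_assoc]
    exact (hupp _).trans (mul_le_mul_of_nonneg_left h hb.le)
  exact mul_le_mul (opNormWrt_le hN (by positivity) hinv) (opNormWrt_le hN (by positivity) hQupp)
    (opNormWrt_nonneg hN Q) (by positivity)
end

section
/- Let m, n be positive integers with n ≤ m, let ‖·‖ be a norm on ℝ^m, and let A ∈ ℝ^{m×n} be a matrix of full column rank n. Then there exist a matrix Q ∈ ℝ^{m×n} and an upper triangular matrix R ∈ ℝ^{n×n} with strictly positive diagonal entries such that A = QR and the columns Q_1, …, Q_n of Q form a generalized QR system for ‖·‖. -/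
/-- In a finite-dimensional real vector space every point has a nearest point, for
the norm `N`, in every subspace. The space carries no topology in the hypotheses, so
that `N` can be installed as its norm without conflicting with another one. -/
lemma exists_best_approx {E : Type*} [AddCommGroup E] [Module ℝ E] [FiniteDimensional ℝ E]
    (N : E → ℝ) (h0 : ∀ x, N x = 0 ↔ x = 0) (hsmul : ∀ (a : ℝ) x, N (a • x) = |a| * N x)
    (hadd : ∀ x y, N (x + y) ≤ N x + N y) (V : Submodule ℝ E) (a : E) :
    ∃ p ∈ V, ∀ w ∈ V, N (a - p) ≤ N (a - w) := by
  have hneg : ∀ x, N (-x) = N x := fun x => by simpa using hsmul (-1) x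
  have hnn : ∀ x, 0 ≤ N x := fun x => by
    have h := hadd x (-x)
    rw [add_neg_cancel, (h0 0).2 rfl, hneg] at h
    linarith
  let _ : Norm E := ⟨N⟩
  have core : NormedSpace.Core ℝ E :=
    { norm_nonneg := hnn
      norm_smul := hsmul
      norm_triangle := hadd
      norm_eq_zero_iff := h0 }
  let _ : NormedAddCommGroup E := NormedAddCommGroup.ofCore core
  let _ : NormedSpace ℝ E := NormedSpace.ofCore core
  have : ProperSpace E := FiniteDimensional.proper ℝ E
  obtain ⟨p, hp, hd⟩ :=
    (Submodule.closed_of_finiteDimensional V).exists_infDist_eq_dist ⟨0, V.zero_mem⟩ a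
  refine ⟨p, hp, fun w hw => ?_⟩
  have h : dist a p ≤ dist a w := hd ▸ Metric.infDist_le_dist_of_mem hw
  rw [dist_eq_norm, dist_eq_norm] at h
  exact h

/-- Rectangular (thin) generalized QR factorization: every `m × n` matrix `A` (`n ≤ m`)
with full column rank (linearly independent columns) factors as `A = Q * R` with the
columns of `Q ∈ ℝ^{m×n}` a generalized QR system for the norm `N` and `R ∈ ℝ^{n×n}`
upper triangular with strictly positive diagonal. -/
theorem generalized_qr_factorization_rect {m n : ℕ} (hm : 0 < m) (hn : 0 < n)
    (hnm : n ≤ m)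
    (N : (Fin m → ℝ) → ℝ) (hN : IsNorm N)
    (A : Matrix (Fin m) (Fin n) ℝ)
    (hA : LinearIndependent ℝ (fun j i => A i j)) :
    ∃ (Q : Matrix (Fin m) (Fin n) ℝ) (R : Matrix (Fin n) (Fin n) ℝ),
      A = Q * R ∧
      (∀ i j, j < i → R i j = 0) ∧
      (∀ i, 0 < R i i) ∧
      GenQRSystem N (fun j i => Q i j) := by
  obtain ⟨h0, hsmul, hadd⟩ := hN
  set a : Fin n → Fin m → ℝ := fun j i => A i j with ha
  have hnn : ∀ x, 0 ≤ N x := fun x => by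
    have h := hadd x (-x)
    have hneg : N (-x) = N x := by simpa using hsmul (-1) x
    rw [add_neg_cancel, (h0 0).2 rfl, hneg] at h
    linarith
  choose p hpV hp using fun k : Fin n =>
    exists_best_approx N h0 hsmul hadd (Submodule.span ℝ (a '' {j | j < k})) (a k)
  have hd : ∀ k, 0 < N (a k - p k) := fun k => by
    refine lt_of_le_of_ne (hnn _) fun h => ?_
    have hk : a k = p k := sub_eq_zero.1 ((h0 _).1 h.symm)
    exact hA.notMem_span_image (s := {j | j < k}) (lt_irrefl k) (hk ▸ hpV k)
  set q : Fin n → Fin m → ℝ := fun k => (N (a k - p k))⁻¹ • (a k - p k) with hq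
  have hdecomp : ∀ k, a k = N (a k - p k) • q k + p k := fun k => by
    simp [hq, smul_smul, mul_inv_cancel₀ (hd k).ne']
  have hqa : ∀ k, Submodule.span ℝ (q '' {j | j < k}) ≤ Submodule.span ℝ (a '' {j | j < k}) := by
    intro k
    rw [Submodule.span_le]
    rintro _ ⟨j, hj, rfl⟩
    refine Submodule.smul_mem _ _ (Submodule.sub_mem _ (Submodule.subset_span ⟨j, hj, rfl⟩) ?_)
    exact Submodule.span_mono (Set.image_mono fun i (hi : i < j) => hi.trans hj) (hpV j)
  have haq : ∀ k, Submodule.span ℝ (a '' {j | j < k}) ≤ Submodule.span ℝ (q '' {j | j < k}) := by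
    intro k
    induction k using WellFoundedLT.induction with
    | ind k ih =>
      rw [Submodule.span_le]
      rintro _ ⟨j, hj, rfl⟩
      rw [SetLike.mem_coe, hdecomp j]
      refine Submodule.add_mem _ (Submodule.smul_mem _ _ (Submodule.subset_span ⟨j, hj, rfl⟩)) ?_
      exact Submodule.span_mono (Set.image_mono fun i (hi : i < j) => hi.trans hj)
        (ih j hj (hpV j))
  have hcoef : ∀ k, ∃ c : Fin n → ℝ, (∀ j, k ≤ j → c j = 0) ∧ ∑ j, c j • q j = p k := by
    intro k
    obtain ⟨l, hl, hlp⟩ := (Finsupp.mem_span_image_iff_linearCombination ℝ).1 (haq k (hpV k))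
    refine ⟨l, fun j hj => ?_, ?_⟩
    · by_contra hne
      exact absurd ((Finsupp.mem_supported ℝ l).1 hl (Finsupp.mem_support_iff.2 hne)) hj.not_gt
    · rw [← hlp, Finsupp.linearCombination_apply, Finsupp.sum_fintype _ _ (by simp)]
  choose c hc0 hc using hcoef
  refine ⟨Matrix.of fun i j => q j i,
    Matrix.of fun i j => if i = j then N (a j - p j) else c j i,
    ?_, ?_, ?_, ?_, ?_⟩
  · ext i k
    have hk : a k = ∑ j, (if j = k then N (a k - p k) else c k j) • q j := by
      have hsplit : ∀ j, (if j = k then N (a k - p k) else c k j) • q j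
          = (if j = k then N (a k - p k) • q k else 0) + c k j • q j := fun j => by
        by_cases h : j = k
        · subst h; simp [hc0]
        · simp [h]
      simp only [hsplit, Finset.sum_add_distrib, hc, Finset.sum_ite_eq', Finset.mem_univ, if_true]
      exact hdecomp k
    have hki := congrFun hk i
    rw [Finset.sum_apply] at hki
    rw [Matrix.mul_apply]
    refine hki.trans (Finset.sum_congr rfl fun j _ => ?_)
    simp [mul_comm]
  · intro i j hij
    simp [hij.ne', hc0 j i hij.le]
  · intro i
    simpa using hd i
  · intro j
    change N (q j) = 1
    rw [hq, hsmul, abs_of_pos (inv_pos.2 (hd j)), inv_mul_cancel₀ (hd j).ne']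
  · intro k w hw
    change 1 ≤ N (q k - w)
    -- `d k • w` shifts the best approximation `p k` within the span of the preceding columns.
    have h1 := hp k (p k + N (a k - p k) • w)
      (Submodule.add_mem _ (hpV k) (Submodule.smul_mem _ _ (hqa k hw)))
    have h2 : a k - (p k + N (a k - p k) • w) = N (a k - p k) • (q k - w) := by
      rw [smul_sub, ← sub_sub, sub_left_inj, sub_eq_iff_eq_add]
      exact hdecomp k
    rw [h2, hsmul, abs_of_pos (hd k)] at h1
    exact le_of_mul_le_mul_left (by simpa using h1) (hd k)
end
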